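/- The set [𝖫^n, 𝖱] of free homotopy classes of continuous maps 𝖫^n → 𝖱 is in bijection with the set of antichains (ordered by inclusion) of 𝒫^a(N^±)∖{∅}, the nonempty admissible subsets of N^± = {+1,…,+n,−1,…,−n}. -/

import Mathlib

noncomputable section
open Set

/-- The first uncountable ordinal `ω₁`. -/
def Omega1 : Ordinal := Ordinal.omega 1

/-- The closed long ray `𝖱`: `ω₁ × [0,1)` with the lexicographic order. -/
def LongRay : Type 1 := {o : Ordinal // o < Omega1} ×ₗ (Set.Ico (0:ℝ) 1)

instance : LinearOrder LongRay :=
  inferInstanceAs (LinearOrder ({o : Ordinal // o < Omega1} ×ₗ (Set.Ico (0:ℝ) 1)))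

/-- `𝖱` carries the order topology. -/
instance : TopologicalSpace LongRay := Preorder.topology LongRay
instance : OrderTopology LongRay := ⟨rfl⟩

lemma omega1_pos : (0 : Ordinal) < Omega1 := Ordinal.omega_pos 1

/-- The point `0 = (0,0)` of the long ray. -/
def rayZero : LongRay := toLex (⟨0, omega1_pos⟩, ⟨0, by simp⟩)

/-- Identification of the countable ordinal `o` with the point `(o,0)` of the long ray
(junk value for `o ≥ ω₁`). -/
def ordR (o : Ordinal) : LongRay :=
  if h : o < Omega1 then toLex (⟨o, h⟩, ⟨0, by simp⟩) else rayZero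

/-- The `I`-diagonal at height `c` (only the values of `c` off `I` are relevant). -/
def Delta (n : ℕ) (I : Finset (Fin n)) (c : Fin n → LongRay) : Set (Fin n → LongRay) :=
  {x | (∀ i ∈ I, ∀ i' ∈ I, x i = x i') ∧ ∀ j ∉ I, x j = c j}

/-- `f` is `I`-cofinal if `f` restricted to `Δ_I = Δ_I(0)` is unbounded. -/
def ICofinal (n : ℕ) (f : (Fin n → LongRay) → LongRay) (I : Finset (Fin n)) : Prop :=
  ¬ BddAbove (f '' Delta n I (fun _ => rayZero))

/-- The cofinality class `𝔠(f) = {I : f is I-cofinal}`. -/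
def cofClass (n : ℕ) (f : (Fin n → LongRay) → LongRay) : Set (Finset (Fin n)) :=
  {I | ICofinal n f I}

/-- `M_I(c) = {x : x_i ≥ c for all i ∈ I}`. -/
def MSet (n : ℕ) (I : Finset (Fin n)) (c : LongRay) : Set (Fin n → LongRay) :=
  {x | ∀ i ∈ I, c ≤ x i}

/-- `E_I(b,d) = {x ∈ M_I(d) : x_j = b_j for all j ∉ I}`. -/
def ESet (n : ℕ) (I : Finset (Fin n)) (b : Fin n → LongRay) (d : LongRay) :
    Set (Fin n → LongRay) :=
  {x | (∀ i ∈ I, d ≤ x i) ∧ ∀ j ∉ I, x j = b j}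

/-- The long line `𝖫`: two copies of the long ray glued at `0` (a reversed copy
followed by a direct copy, with the two zeros identified), with the order topology. -/
def LongLine : Type 1 :=
  {x : LongRayᵒᵈ ⊕ₗ LongRay // x ≠ toLex (Sum.inl (OrderDual.toDual rayZero))}

instance : LinearOrder LongLine :=
  inferInstanceAs (LinearOrder
    {x : LongRayᵒᵈ ⊕ₗ LongRay // x ≠ toLex (Sum.inl (OrderDual.toDual rayZero))})

instance : TopologicalSpace LongLine := Preorder.topology LongLine
instance : OrderTopology LongLine := ⟨rfl⟩

/-- Signed coordinates: `(i, true)` stands for `+i` and `(i, false)` for `-i`.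
A set of signed coordinates is admissible if it contains no pair `+i, -i`. -/
def Admissible (n : ℕ) (I : Finset (Fin n × Bool)) : Prop :=
  ∀ i : Fin n, ¬ ((i, true) ∈ I ∧ (i, false) ∈ I)

/-!
A continuous self-map of `𝖱` is either bounded or tends to infinity, and in a family of such maps
boundedness is a clopen condition on the parameter. Hence the cofinality class `𝔠(f)`, the set of
admissible `J` along whose diagonal `f` is unbounded, is a homotopy invariant, and it does not
matter where the coordinates off `J` are fixed. It is moreover upward closed.

Conversely `𝔠(f)` determines `f` up to homotopy. Write `|x|_p` for the absolute value of `x` in the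
signed direction `p`. For cofinally many countable ordinals `α`, one has `f x ≥ α` if and only if
`{p : |x|_p ≥ α} ∈ 𝔠(f)`. Two maps with the same class therefore cross these heights
simultaneously, and they are joined by straight lines inside the intervals between consecutive such
heights, each of which is isomorphic to a real interval.

An upward closed set of admissible sets is determined by the antichain of its minimal elements, and
every antichain `A` of nonempty sets arises from the map `x ↦ max_{I ∈ A} min_{p ∈ I} |x|_p`.
-/

/-- The countable ordinals. -/
abbrev CtblOrd : Type 1 := {o : Ordinal.{0} // o < Omega1.{0}}

namespace CtblOrd

instance : OrderBot CtblOrd where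
  bot := ⟨0, omega1_pos⟩
  bot_le a := zero_le (a := a.1)

instance : NoMaxOrder CtblOrd :=
  ⟨fun a => ⟨⟨_, (Cardinal.isSuccLimit_omega 1).succ_lt a.2⟩, Order.lt_succ a.1⟩⟩

lemma countable_Iic (a : CtblOrd) : (Iic a).Countable := by
  have h : (Iic a.1).Countable := by
    have ha := Cardinal.lt_omega_iff_card_lt.1 ((Cardinal.isSuccLimit_omega 1).succ_lt a.2)
    rw [Cardinal.lt_aleph_one_iff] at ha
    rw [← Order.Iio_succ, ← Cardinal.le_aleph0_iff_set_countable, Cardinal.mk_Iio_ordinal]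
    simpa only [Cardinal.lift_le_aleph0, Ordinal.lift_card] using
      Cardinal.lift_le_aleph0.{0, 1}.2 ha
  exact h.preimage Subtype.val_injective

lemma bddAbove_of_countable {s : Set CtblOrd} (hs : s.Countable) : BddAbove s := by
  have := hs.to_subtype
  refine ⟨⟨⨆ i : s, i.1.1, Ordinal.iSup_lt_omega_one fun i => i.1.2⟩, fun a ha => ?_⟩
  exact le_ciSup (f := fun i : s => i.1.1) ⟨Omega1, forall_mem_range.2 fun i => i.1.2.le⟩ ⟨a, ha⟩

/-- Iterating a strict bound for `G` on initial segments and passing to the supremum closes up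
under `G`. -/
lemma isCofinal_setOf_forall_lt_lt (G : CtblOrd → CtblOrd) :
    IsCofinal {α | ∀ δ < α, G δ < α} := by
  intro a
  have hbound : ∀ b, ∃ c, ∀ δ ≤ b, G δ < c := fun b => by
    obtain ⟨c, hc⟩ := bddAbove_of_countable ((countable_Iic b).image G)
    obtain ⟨d, hd⟩ := exists_gt c
    exact ⟨d, fun δ hδ => (hc (mem_image_of_mem G hδ)).trans_lt hd⟩
  choose next hG using hbound
  let u : ℕ → CtblOrd := fun k => next^[k] a
  have hu : ∀ k, u (k + 1) = next (u k) := fun k => Function.iterate_succ_apply' next k a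
  obtain ⟨α, hα, hmin⟩ := wellFounded_lt.has_min (upperBounds (range u))
    (bddAbove_of_countable (countable_range u))
  refine ⟨α, fun δ hδ => ?_, hα (mem_range_self 0)⟩
  obtain ⟨k, hk⟩ : ∃ k, δ < u k := by
    by_contra! h
    exact hmin δ (forall_mem_range.2 h) hδ
  exact (hu k ▸ hG (u k) δ hk.le).trans_le (hα (mem_range_self (k + 1)))

end CtblOrd

lemma exists_isGLB_lex {α β : Type*} [LinearOrder α] [WellFoundedLT α]
    [ConditionallyCompleteLinearOrder β] [OrderBot β] {s : Set (α ×ₗ β)} (hs : s.Nonempty) :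
    ∃ a, IsGLB s a := by
  obtain ⟨c, ⟨x₀, hx₀, rfl⟩, hmin⟩ :=
    wellFounded_lt.has_min ((fun x => (ofLex x).1) '' s) (hs.image _)
  set c := (ofLex x₀).1
  let fibre : Set β := {t | toLex (c, t) ∈ s}
  have hfibre : fibre.Nonempty := ⟨(ofLex x₀).2, hx₀⟩
  refine ⟨toLex (c, sInf fibre), fun x hx => Prod.Lex.le_iff'.2
    ⟨not_lt.1 (hmin _ (mem_image_of_mem _ hx)), fun h => csInf_le (OrderBot.bddBelow _) ?_⟩,
    fun y hy => Prod.Lex.le_iff'.2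
      ⟨(Prod.Lex.le_iff'.1 (hy hx₀)).1, fun h => le_csInf hfibre fun t ht => ?_⟩⟩
  · change toLex (c, _) ∈ s
    rwa [show c = (ofLex x).1 from h]
  · exact (Prod.Lex.le_iff'.1 (hy ht)).2 h

open scoped Classical in
/-- A linear order with a least element in which nonempty sets have greatest lower bounds, as a
conditionally complete linear order. -/
abbrev conditionallyCompleteLinearOrderOfExistsIsGLB (α : Type*) [i : LinearOrder α] [OrderBot α]
    (h : ∀ s : Set α, s.Nonempty → ∃ a, IsGLB s a) : ConditionallyCompleteLinearOrder α where
  __ := i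
  __ := LinearOrder.toLattice
  __ :=
    letI : InfSet α := ⟨fun s => if hs : s.Nonempty then (h s hs).choose else ⊥⟩
    conditionallyCompleteLatticeOfLatticeOfsInf _ fun s _ hs => by
      simpa only [sInf, dif_pos hs] using (h s hs).choose_spec
  csSup_of_not_bddAbove s hs := by
    have hempty : upperBounds s = ∅ := not_nonempty_iff_eq_empty.1 hs
    simpa [sSup, sInf, hempty] using (isGLB_univ (α := α)).unique (h univ univ_nonempty).choose_spec
  csInf_of_not_bddBelow s hs := (hs (OrderBot.bddBelow s)).elim

lemma exists_continuous_strictMonoOn {ι X : Type*} [Countable ι] [Preorder X] [TopologicalSpace X]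
    {F : ι → X → unitInterval} (hcont : ∀ i, Continuous (F i)) (hmono : ∀ i, Monotone (F i))
    {s : Set X} (hsep : ∀ x ∈ s, ∀ y ∈ s, x < y → ∃ i, F i x < F i y) :
    ∃ φ : X → ℝ, Continuous φ ∧ StrictMonoOn φ s := by
  have := Encodable.ofCountable ι
  obtain ⟨w, hpos, _, hw, -⟩ := posSumOfEncodable one_pos ι
  have hle : ∀ i x, w i * F i x ≤ w i := fun i x => mul_le_of_le_one_right (hpos i).le (F i x).2.2
  have hnonneg : ∀ i x, 0 ≤ w i * F i x := fun i x => mul_nonneg (hpos i).le (F i x).2.1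
  have hsum : ∀ x, Summable fun i => w i * F i x := fun x =>
    hw.summable.of_nonneg_of_le (fun i => hnonneg i x) fun i => hle i x
  refine ⟨fun x => ∑' i, w i * F i x, continuous_tsum (by fun_prop) hw.summable fun i x => ?_,
    fun x hx y hy hxy => ?_⟩
  · rw [Real.norm_of_nonneg (hnonneg i x)]
    exact hle i x
  · obtain ⟨i, hi⟩ := hsep x hx y hy hxy
    exact (hsum x).tsum_lt_tsum (fun j => mul_le_mul_of_nonneg_left (hmono j hxy.le) (hpos j).le)
      (mul_lt_mul_of_pos_left hi (hpos i)) (hsum y)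

namespace LongRay

/-- The point of the long ray with integral part `a` and fractional part `t`. -/
def mk (a : CtblOrd) (t : Ico (0 : ℝ) 1) : LongRay := toLex (a, t)

/-- The integral part of a point of the long ray. -/
def fst (x : LongRay) : CtblOrd := (ofLex x).1

/-- The fractional part of a point of the long ray. -/
def snd (x : LongRay) : Ico (0 : ℝ) 1 := (ofLex x).2

/-- The countable ordinals inside the long ray. -/
def ofOrd (a : CtblOrd) : LongRay := mk a ⊥

instance : OrderBot LongRay := inferInstanceAs (OrderBot (CtblOrd ×ₗ Ico (0 : ℝ) 1))

instance : NoMaxOrder LongRay := inferInstanceAs (NoMaxOrder (CtblOrd ×ₗ Ico (0 : ℝ) 1))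

instance : DenselyOrdered LongRay := inferInstanceAs (DenselyOrdered (CtblOrd ×ₗ Ico (0 : ℝ) 1))

instance : ConditionallyCompleteLinearOrder LongRay :=
  letI : Inhabited (Ico (0 : ℝ) 1) := ⟨⊥⟩
  conditionallyCompleteLinearOrderOfExistsIsGLB LongRay fun _ hs =>
    exists_isGLB_lex (α := CtblOrd) (β := Ico (0 : ℝ) 1) hs

lemma lt_iff {x y : LongRay} : x < y ↔ x.fst < y.fst ∨ x.fst = y.fst ∧ x.snd < y.snd :=
  Prod.Lex.lt_iff

lemma fst_mono : Monotone fst := Prod.Lex.monotone_fst_ofLex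

lemma ofOrd_le_iff {a : CtblOrd} {x : LongRay} : ofOrd a ≤ x ↔ a ≤ x.fst :=
  Prod.Lex.le_iff'.trans (and_iff_left fun _ => bot_le)

lemma lt_ofOrd_iff {a : CtblOrd} {x : LongRay} : x < ofOrd a ↔ x.fst < a := by
  rw [← not_le, ofOrd_le_iff, not_le]

lemma bddAbove_of_countable {s : Set LongRay} (hs : s.Countable) : BddAbove s := by
  obtain ⟨b, hb⟩ := CtblOrd.bddAbove_of_countable (hs.image fst)
  obtain ⟨c, hc⟩ := exists_gt b
  exact ⟨ofOrd c, fun x hx => (lt_ofOrd_iff.2 ((hb (mem_image_of_mem _ hx)).trans_lt hc)).le⟩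

/-- The retraction of the long ray onto its segment from `d` to `d + 1`. -/
def ramp (d : CtblOrd) (x : LongRay) : unitInterval :=
  if x.fst < d then 0 else if d < x.fst then 1 else ⟨x.snd, Ico_subset_Icc_self x.snd.2⟩

lemma monotone_ramp (d : CtblOrd) : Monotone (ramp d) := fun x y hxy => by
  rcases lt_trichotomy x.fst d with hx | rfl | hx
  · simp only [ramp, hx, if_true]
    exact unitInterval.nonneg'
  · rcases Prod.Lex.le_iff.1 hxy with h | ⟨h, h'⟩
    · change x.fst < y.fst at h
      simpa only [ramp, h, h.not_gt, if_true, if_false] using unitInterval.le_one'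
    · change x.fst = y.fst at h
      simpa only [ramp, h, lt_irrefl, if_false] using! h'
  · have hy : d < y.fst := hx.trans_le (fst_mono hxy)
    simp only [ramp, hx, hx.not_gt, hy, hy.not_gt, if_true, if_false, le_refl]

lemma surjective_ramp (d : CtblOrd) : Function.Surjective (ramp d) := fun t => by
  rcases t.2.2.eq_or_lt with ht | ht
  · obtain ⟨b, hb⟩ := exists_gt d
    refine ⟨ofOrd b, ?_⟩
    have : (ofOrd b).fst = b := rfl
    simp only [ramp, this, hb, hb.not_gt, if_true, if_false]
    exact Subtype.ext ht.symm
  · refine ⟨mk d ⟨t, t.2.1, ht⟩, ?_⟩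
    have : (mk d ⟨t, t.2.1, ht⟩).fst = d := rfl
    simp only [ramp, this, lt_irrefl, if_false]
    rfl

lemma continuous_ramp (d : CtblOrd) : Continuous (ramp d) :=
  (monotone_ramp d).continuous_of_surjective (surjective_ramp d)

lemma ramp_fst_lt {x y : LongRay} (h : x < y) : ramp x.fst x < ramp x.fst y := by
  rcases lt_iff.1 h with h | ⟨h, h'⟩
  · simp only [ramp, h, h.not_gt, lt_irrefl, if_true, if_false]
    exact x.snd.2.2
  · simpa only [ramp, ← h, lt_irrefl, if_false] using! h'

/-- The chart exists since countably many ramps separate the points of a bounded interval. -/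
lemma exists_orderIso_Icc (b : LongRay) : ∃ l u : ℝ, Nonempty (Iic b ≃o Icc l u) := by
  have := (CtblOrd.countable_Iic b.fst).to_subtype
  obtain ⟨φ, hφ, hmono⟩ := exists_continuous_strictMonoOn (s := Iic b)
    (F := fun d : Iic b.fst => ramp d) (fun d => continuous_ramp d) (fun d => monotone_ramp d)
    fun x hx y _ hxy => ⟨⟨x.fst, fst_mono hx⟩, ramp_fst_lt hxy⟩
  have himage : φ '' Iic b = Icc (φ ⊥) (φ b) := by
    rw [← Icc_bot] at hmono ⊢
    exact hφ.continuousOn.image_Icc_of_monotoneOn bot_le hmono.monotoneOn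
  exact ⟨φ ⊥, φ b, ⟨(hmono.orderIso φ _).trans (OrderIso.setCongr _ _ himage)⟩⟩

lemma isCompact_Iic (b : LongRay) : IsCompact (Iic b) := by
  rw [← Icc_bot]
  exact isCompact_Icc

lemma isSeparable_Iic (b : LongRay) : TopologicalSpace.IsSeparable (Iic b) := by
  obtain ⟨l, u, ⟨e⟩⟩ := exists_orderIso_Icc b
  have : TopologicalSpace.SeparableSpace (Iic b) :=
    e.symm.surjective.denseRange.separableSpace e.symm.continuous
  exact .of_subtype _

lemma exists_interpolation (b : LongRay) :
    ∃ S : C(LongRay × LongRay × unitInterval, LongRay), ∀ x ≤ b, ∀ y ≤ b,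
      S (x, y, 0) = x ∧ S (x, y, 1) = y ∧ ∀ t, S (x, y, t) ∈ uIcc x y := by
  obtain ⟨l, u, ⟨e⟩⟩ := exists_orderIso_Icc b
  have hproj : Continuous (projIic b) := by unfold projIic; fun_prop
  refine ⟨⟨fun z => e.symm (Icc.convexComb (e (projIic b z.1)) (e (projIic b z.2.1)) z.2.2),
    continuous_subtype_val.comp (e.symm.continuous.comp (Icc.continuous_convexComb_prod.comp
      (f := fun z : LongRay × LongRay × unitInterval =>
        (e (projIic b z.1), e (projIic b z.2.1), z.2.2))
      (by have := e.continuous; fun_prop)))⟩, fun x hx y hy => ?_⟩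
  have hseg : ∀ {x y : Iic b}, x ≤ y → ∀ t,
      (e.symm (Icc.convexComb (e x) (e y) t) : LongRay) ∈ Icc x.1 y.1 := fun {x y} hxy t =>
    ⟨e.le_symm_apply.2 (Icc.le_convexComb (e.monotone hxy) t),
      e.symm_apply_le.2 (Icc.convexComb_le (e.monotone hxy) t)⟩
  simp only [ContinuousMap.coe_mk, projIic_of_mem (mem_Iic.2 hx), projIic_of_mem (mem_Iic.2 hy),
    Icc.convexComb_zero, Icc.convexComb_one, e.symm_apply_apply, true_and]
  intro t
  rcases le_total x y with h | h
  · rw [uIcc_of_le h]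
    exact hseg (x := ⟨x, hx⟩) (y := ⟨y, hy⟩) h t
  · rw [uIcc_of_ge h, ← Icc.convexComb_symm]
    exact hseg (x := ⟨y, hy⟩) (y := ⟨x, hx⟩) h _

instance : PathConnectedSpace LongRay where
  nonempty := ⟨⊥⟩
  joined x y := by
    obtain ⟨S, hS⟩ := exists_interpolation (x ⊔ y)
    obtain ⟨hsource, htarget, -⟩ := hS x le_sup_left y le_sup_right
    exact ⟨⟨⟨fun t => S (x, y, t), by fun_prop⟩, hsource, htarget⟩⟩

section Homotopy

open Filter Topology

variable {X : Type*} [TopologicalSpace X] {f g : C(X, LongRay)}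

/-- Where `f x ≠ g x` the fibre, hence the chart used to interpolate, is locally constant; where
`f x = g x` the interpolation is squeezed between `f` and `g`. -/
theorem homotopic_of_forall_label_eq {ι : Type*} (label : LongRay → ι)
    (hbdd : ∀ i, BddAbove (label ⁻¹' {i}))
    (hnhds : ∀ ⦃u v⦄, u < v → label u = label v → label ⁻¹' {label v} ∈ 𝓝 v)
    (h : ∀ x, label (f x) = label (g x)) : f.Homotopic g := by
  choose b hb using hbdd
  choose S hS using exists_interpolation
  have hS' := fun x => hS (b (label (f x))) (f x) (hb _ rfl) (g x) (hb _ (h x).symm)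
  let H : unitInterval × X → LongRay := fun p => S (b (label (f p.2))) (f p.2, g p.2, p.1)
  refine ⟨⟨⟨H, continuous_iff_continuousAt.2 fun ⟨t, x⟩ => ?_⟩, fun x => (hS' x).1,
    fun x => (hS' x).2.1⟩⟩
  by_cases hx : f x = g x
  · have hmin : ContinuousAt (fun p : unitInterval × X => f p.2 ⊓ g p.2) (t, x) := by fun_prop
    have hmax : ContinuousAt (fun p : unitInterval × X => f p.2 ⊔ g p.2) (t, x) := by fun_prop
    have hHx : H (t, x) = f x := by
      change S _ _ = _
      simpa only [hx, uIcc_self, mem_singleton_iff] using (hS' x).2.2 t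
    simp only [ContinuousAt, ← hx, inf_idem, sup_idem, hHx] at hmin hmax ⊢
    exact tendsto_of_tendsto_of_tendsto_of_le_of_le hmin hmax (fun p => ((hS' p.2).2.2 p.1).1)
      fun p => ((hS' p.2).2.2 p.1).2
  · have hlabel : ∀ᶠ x' in 𝓝 x, label (f x') = label (f x) := by
      rcases lt_or_gt_of_ne hx with hlt | hlt
      · filter_upwards [g.continuous.continuousAt (hnhds hlt (h x))] with x' hx'
        rw [h, h]
        exact hx'
      · exact f.continuous.continuousAt (hnhds hlt (h x).symm)
    have hcont : ContinuousAt
        (fun p : unitInterval × X => S (b (label (f x))) (f p.2, g p.2, p.1)) (t, x) := by fun_prop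
    refine hcont.congr ?_
    filter_upwards [continuousAt_snd.eventually hlabel] with p hp
    simp only [H, hp]

theorem homotopic_of_isCofinal {C : Set CtblOrd} (hC : IsCofinal C)
    (h : ∀ c ∈ C, ∀ x, c ≤ (f x).fst ↔ c ≤ (g x).fst) : f.Homotopic g := by
  refine homotopic_of_forall_label_eq (fun u => C ∩ Iic u.fst) (fun s => ?_)
    (fun u v huv (hlabel : C ∩ _ = C ∩ _) => ?_)
    fun x => Set.ext fun c => and_congr_right fun hc => h c hc x
  · rcases (fun u : LongRay => C ∩ Iic u.fst) ⁻¹' {s} |>.eq_empty_or_nonempty with hs | ⟨u, rfl⟩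
    · exact hs ▸ bddAbove_empty
    obtain ⟨a, ha⟩ := exists_gt u.fst
    obtain ⟨c, hc, hac⟩ := hC a
    refine ⟨ofOrd c, fun v (hv : C ∩ _ = C ∩ _) => (lt_ofOrd_iff.2 (not_le.1 fun hcv => ?_)).le⟩
    exact (ha.trans_le hac).not_ge (hv.le ⟨hc, hcv⟩).2
  · obtain ⟨a, ha⟩ := exists_covBy_of_wellFoundedLT (not_isMax v.fst)
    filter_upwards [Ioo_mem_nhds huv (lt_ofOrd_iff.2 ha.lt)] with w ⟨huw, hwa⟩
    have hwv : w.fst ≤ v.fst := ha.lt_iff_le_left.1 (lt_ofOrd_iff.1 hwa)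
    refine Subset.antisymm (inter_subset_inter_right C (Iic_subset_Iic.2 hwv)) ?_
    change C ∩ Iic v.fst ⊆ C ∩ Iic w.fst
    exact hlabel ▸ inter_subset_inter_right C (Iic_subset_Iic.2 (fst_mono huw.le))

end Homotopy

section SelfMaps

open Filter Topology

lemma inter_nonempty_of_isCofinal {S T : Set LongRay} (hS : IsClosed S) (hT : IsClosed T)
    (hS' : IsCofinal S) (hT' : IsCofinal T) : (S ∩ T).Nonempty := by
  choose p hpS hp using hS'
  choose q hqT hq using hT'
  let u : ℕ → LongRay := fun k => (q ∘ p)^[k] ⊥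
  have hsucc : ∀ k, u (k + 1) = q (p (u k)) := fun k => Function.iterate_succ_apply' _ k ⊥
  have hmono : Monotone u := monotone_nat_of_le_succ fun k => hsucc k ▸ (hp _).trans (hq _)
  have hu := tendsto_atTop_ciSup hmono (bddAbove_of_countable (countable_range u))
  have hu' := hu.comp (tendsto_add_atTop_nat 1)
  refine ⟨⨆ k, u k, hS.mem_of_tendsto (f := fun k => p (u k)) (b := atTop) ?_
      (Eventually.of_forall fun k => hpS _),
    hT.mem_of_tendsto hu' (Eventually.of_forall fun k => show u (k + 1) ∈ T from hsucc k ▸ hqT _)⟩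
  exact tendsto_of_tendsto_of_tendsto_of_le_of_le hu hu' (fun k => hp _)
    fun k => (hq _).trans_eq (hsucc k).symm

lemma tendsto_atTop_atTop_of_not_bddAbove_range {u : LongRay → LongRay} (hu : Continuous u)
    (hunbdd : ¬BddAbove (range u)) : Tendsto u atTop atTop := by
  refine tendsto_atTop.2 fun b => ?_
  by_contra hfreq
  obtain ⟨c, hbc⟩ := exists_gt b
  have hle : IsCofinal {r | u r ≤ b} := fun x => by
    obtain ⟨r, hr, hrb⟩ := frequently_atTop.1 (not_eventually.1 hfreq) x
    exact ⟨r, (not_le.1 hrb).le, hr⟩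
  have hge : IsCofinal {r | c ≤ u r} := fun x => by
    by_contra! h
    obtain ⟨m, hm⟩ := (isCompact_Iic x).bddAbove_image hu.continuousOn
    refine hunbdd ⟨m ⊔ c, forall_mem_range.2 fun r => ?_⟩
    rcases le_total r x with hr | hr
    · exact (hm (mem_image_of_mem u hr)).trans le_sup_left
    · by_contra hlt
      exact (h r (le_sup_right.trans (not_le.1 hlt).le)).not_ge hr
  obtain ⟨r, hrb, hrc⟩ := inter_nonempty_of_isCofinal (isClosed_le hu continuous_const)
    (isClosed_le continuous_const hu) hle hge
  exact (hbc.trans_le hrc).not_ge hrb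

variable {Y : Type*} [TopologicalSpace Y] {F : Y → LongRay → LongRay}

lemma exists_forall_mem_closure_le (hF : ∀ r, Continuous (F · r)) {c : Set Y} (hc : c.Countable)
    (h : ∀ y ∈ c, BddAbove (range (F y))) : ∃ B, ∀ y ∈ closure c, ∀ r, F y r ≤ B := by
  choose! b hb using h
  obtain ⟨B, hB⟩ := bddAbove_of_countable (hc.image b)
  have hle : ∀ y ∈ c, ∀ r, F y r ≤ B := fun y hy r =>
    (hb y hy (mem_range_self r)).trans (hB (mem_image_of_mem b hy))
  exact ⟨B, fun y hy r => closure_minimal (fun y hy => hle y hy r)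
    (isClosed_le (hF r) continuous_const) hy⟩

lemma exists_forall_mem_closure_ge (hF : ∀ r, Continuous (F · r)) {c : Set Y} (hc : c.Countable)
    (h : ∀ y ∈ c, Tendsto (F y) atTop atTop) (β : LongRay) :
    ∃ γ, ∀ y ∈ closure c, ∀ r ≥ γ, β ≤ F y r := by
  choose! b hb using fun y hy => eventually_atTop.1 (tendsto_atTop.1 (h y hy) β)
  obtain ⟨γ, hγ⟩ := bddAbove_of_countable (hc.image b)
  have hge : ∀ y ∈ c, ∀ r ≥ γ, β ≤ F y r := fun y hy r hr =>
    hb y hy r ((hγ (mem_image_of_mem b hy)).trans hr)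
  exact ⟨γ, fun y hy r hr => closure_minimal (fun y hy => hge y hy r hr)
    (isClosed_le continuous_const (hF r)) hy⟩

lemma isClopen_setOf_bddAbove_range [FirstCountableTopology Y] (hF : ∀ r, Continuous (F · r))
    (hF' : ∀ y, Continuous (F y)) : IsClopen {y | BddAbove (range (F y))} := by
  have hmem : ∀ {x : ℕ → Y} {y}, Tendsto x atTop (𝓝 y) → y ∈ closure (range x) := fun hx =>
    mem_closure_of_tendsto hx (Eventually.of_forall mem_range_self)
  refine ⟨isSeqClosed_iff_isClosed.1 fun x y hx hxy => ?_,
    isClosed_compl_iff.1 (isSeqClosed_iff_isClosed.1 fun x y hx hxy => ?_)⟩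
  · obtain ⟨B, hB⟩ := exists_forall_mem_closure_le hF (countable_range x) (forall_mem_range.2 hx)
    exact ⟨B, forall_mem_range.2 (hB y (hmem hxy))⟩
  · have hlim : Tendsto (F y) atTop atTop := tendsto_atTop.2 fun β => by
      obtain ⟨γ, hγ⟩ := exists_forall_mem_closure_ge hF (countable_range x) (forall_mem_range.2
        fun k => tendsto_atTop_atTop_of_not_bddAbove_range (hF' _) (hx k)) β
      exact eventually_atTop.2 ⟨γ, hγ y (hmem hxy)⟩
    exact not_bddAbove_of_tendsto_atTop hlim

lemma bddAbove_range_iff_of_homotopic {u v : C(LongRay, LongRay)} (h : u.Homotopic v) :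
    BddAbove (range u) ↔ BddAbove (range v) := by
  suffices key : ∀ {u v : C(LongRay, LongRay)}, u.Homotopic v →
      BddAbove (range u) → BddAbove (range v) from ⟨key h, key h.symm⟩
  rintro u v ⟨H⟩ hu
  have huniv := (isClopen_setOf_bddAbove_range (F := fun t r => H (t, r))
    (fun r => by fun_prop) (fun t => by fun_prop)).eq_univ ⟨0, by simpa [H.apply_zero] using hu⟩
  simpa [H.apply_one] using huniv.ge (mem_univ 1)

end SelfMaps

end LongRay

namespace LongLine

/-- The inclusion of the long ray as the positive (`true`) or negative (`false`) half of the long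
line. The negative half sends `0` to the point it shares with the positive one. -/
def ofRay : Bool → LongRay → LongLine
  | true, r => ⟨toLex (Sum.inr r), by simp⟩
  | false, r =>
    if h : r = rayZero then ⟨toLex (Sum.inr r), by simp⟩
    else ⟨toLex (Sum.inl (OrderDual.toDual r)), by simpa using h⟩

/-- The positive (`true`) and negative (`false`) parts of a point of the long line. -/
def part (s : Bool) (x : LongLine) : LongRay :=
  match s, ofLex x.1 with
  | true, Sum.inr r => r
  | true, Sum.inl _ => ⊥
  | false, Sum.inr _ => ⊥
  | false, Sum.inl r => OrderDual.ofDual r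

lemma ofRay_bot (s : Bool) : ofRay s ⊥ = ofRay true ⊥ := by
  cases s
  · exact dif_pos rfl
  · rfl

lemma ofRay_false_of_ne_bot {r : LongRay} (h : r ≠ ⊥) :
    ofRay false r = ⟨toLex (Sum.inl (OrderDual.toDual r)), by simpa using! h⟩ := dif_neg h

lemma part_ofRay (s : Bool) (r : LongRay) : part s (ofRay s r) = r := by
  rcases eq_or_ne r ⊥ with rfl | h
  · rw [ofRay_bot]
    cases s <;> rfl
  · cases s
    · rw [ofRay_false_of_ne_bot h]
      rfl
    · rfl

lemma part_not_ofRay (s : Bool) (r : LongRay) : part (!s) (ofRay s r) = ⊥ := by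
  rcases eq_or_ne r ⊥ with rfl | h
  · rw [ofRay_bot]
    cases s <;> rfl
  · cases s
    · rw [ofRay_false_of_ne_bot h]
      rfl
    · rfl

lemma exists_part_not_eq_bot (x : LongLine) : ∃ s, part (!s) x = ⊥ := by
  obtain ⟨_ | _, _⟩ := x
  exacts [⟨false, rfl⟩, ⟨true, rfl⟩]

lemma le_iff_part_le_part {x y : LongLine} :
    x ≤ y ↔ part true x ≤ part true y ∧ part false y ≤ part false x := by
  obtain ⟨r | r, hx⟩ := x <;> obtain ⟨r' | r', hy⟩ := y
  · exact Sum.Lex.inl_le_inl_iff.trans (and_iff_right le_rfl).symm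
  · exact iff_of_true (Sum.Lex.inl_le_inr _ _) ⟨bot_le, bot_le⟩
  · have hr' : OrderDual.ofDual r' ≠ ⊥ := fun h =>
      hy (congrArg (fun r => toLex (Sum.inl (OrderDual.toDual r))) h)
    exact iff_of_false Sum.Lex.not_inr_le_inl fun h => hr' (le_bot_iff.1 h.2)
  · exact Sum.Lex.inr_le_inr_iff.trans (and_iff_left le_rfl).symm

lemma monotone_part_true : Monotone (part true) := fun _ _ h => (le_iff_part_le_part.1 h).1

lemma antitone_part_false : Antitone (part false) := fun _ _ h => (le_iff_part_le_part.1 h).2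

lemma ext_part {x y : LongLine} (h : ∀ s, part s x = part s y) : x = y :=
  le_antisymm (le_iff_part_le_part.2 ⟨(h true).le, (h false).ge⟩)
    (le_iff_part_le_part.2 ⟨(h true).ge, (h false).le⟩)

lemma ofRay_part {s : Bool} {x : LongLine} (h : part (!s) x = ⊥) : ofRay s (part s x) = x :=
  ext_part fun s' => by
    rcases eq_or_ne s' s with rfl | hs
    · exact part_ofRay _ _
    · rw [Bool.eq_not.2 hs, part_not_ofRay, h]

lemma ofRay_part_of_pos {s : Bool} {x : LongLine} (h : ⊥ < part s x) : ofRay s (part s x) = x := by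
  obtain ⟨s', hs'⟩ := exists_part_not_eq_bot x
  rcases eq_or_ne s' s with rfl | hs
  · exact ofRay_part hs'
  · rw [Bool.eq_not.2 hs, Bool.not_not] at hs'
    exact absurd hs' h.ne'

lemma range_ofRay (s : Bool) : range (ofRay s) = part (!s) ⁻¹' Iic ⊥ :=
  Subset.antisymm (range_subset_iff.2 fun r => (part_not_ofRay s r).le)
    fun _ hx => ⟨_, ofRay_part (le_bot_iff.1 hx)⟩

@[fun_prop]
lemma continuous_part (s : Bool) : Continuous (part s) := by
  have hsurj : Function.Surjective (part s) := fun r => ⟨_, part_ofRay s r⟩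
  cases s
  · exact Monotone.continuous_of_surjective (α := LongLineᵒᵈ)
      (fun _ _ h => antitone_part_false h) hsurj
  · exact monotone_part_true.continuous_of_surjective hsurj

@[fun_prop]
lemma continuous_ofRay (s : Bool) : Continuous (ofRay s) := by
  have hinj : Function.Injective (ofRay s) := Function.LeftInverse.injective (part_ofRay s)
  have hrange := range_ofRay s
  cases s
  · have hmono : Monotone (fun r : LongRayᵒᵈ => ofRay false (OrderDual.ofDual r)) := fun r r' h =>
      le_iff_part_le_part.2
        ⟨(part_not_ofRay false r.ofDual).le.trans bot_le, by simpa only [part_ofRay] using! h⟩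
    exact ((hmono.strictMono_of_injective hinj).isEmbedding_of_ordConnected
      (hrange ▸ ordConnected_Iic.preimage_mono monotone_part_true)).continuous
  · have hmono : Monotone (ofRay true) := fun r r' h =>
      le_iff_part_le_part.2
        ⟨by simpa only [part_ofRay] using h, (part_not_ofRay true r').le.trans bot_le⟩
    exact ((hmono.strictMono_of_injective hinj).isEmbedding_of_ordConnected
      (hrange ▸ ordConnected_Iic.preimage_anti antitone_part_false)).continuous

instance : PathConnectedSpace LongLine where
  nonempty := ⟨ofRay true ⊥⟩
  joined x y := by
    have h : ∀ x : LongLine, Joined x (ofRay true ⊥) := fun x => by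
      obtain ⟨s, hs⟩ := exists_part_not_eq_bot x
      rw [← ofRay_part hs, ← ofRay_bot s]
      exact (PathConnectedSpace.joined _ _).map (continuous_ofRay _)
    exact (h x).trans (h y).symm

lemma setOf_forall_part_le (δ : LongRay) :
    {x : LongLine | ∀ s, part s x ≤ δ} = ⋃ s, ofRay s '' Iic δ := by
  ext x
  simp only [mem_ofPred_eq, mem_iUnion, mem_image, mem_Iic]
  constructor
  · obtain ⟨s, hs⟩ := exists_part_not_eq_bot x
    exact fun hx => ⟨s, _, hx _, ofRay_part hs⟩
  · rintro ⟨s, r, hr, rfl⟩ s'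
    rcases eq_or_ne s' s with rfl | hs
    · rwa [part_ofRay]
    · rw [Bool.eq_not.2 hs, part_not_ofRay]
      exact bot_le

lemma isSeparable_setOf_forall_part_le (δ : LongRay) :
    TopologicalSpace.IsSeparable {x : LongLine | ∀ s, part s x ≤ δ} := by
  rw [setOf_forall_part_le]
  exact .iUnion fun s => (LongRay.isSeparable_Iic δ).image (continuous_ofRay s)

lemma isCompact_setOf_forall_part_le (δ : LongRay) :
    IsCompact {x : LongLine | ∀ s, part s x ≤ δ} := by
  rw [setOf_forall_part_le]
  exact isCompact_iUnion fun s => (LongRay.isCompact_Iic δ).image (continuous_ofRay s)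

end LongLine

lemma homotopic_curry {X Y Z : Type*} [TopologicalSpace X] [PathConnectedSpace X]
    [TopologicalSpace Y] [TopologicalSpace Z] (F : C(X × Y, Z)) (x x' : X) :
    (F.curry x).Homotopic (F.curry x') := by
  let γ := PathConnectedSpace.somePath x x'
  exact ⟨⟨⟨fun z => F (γ z.1, z.2), by fun_prop⟩, fun _ => by simp, fun _ => by simp⟩⟩

section Cofinality

open Filter Topology LongRay

variable {n : ℕ}

lemma Admissible.mono {I J : Finset (Fin n × Bool)} (hJ : Admissible n J) (h : I ⊆ J) :
    Admissible n I := fun i hi => hJ i ⟨h hi.1, h hi.2⟩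

lemma Admissible.not_mem_opposite {J : Finset (Fin n × Bool)} (hJ : Admissible n J)
    {p : Fin n × Bool} (hp : p ∈ J) : (p.1, !p.2) ∉ J := fun h => by
  obtain ⟨i, _ | _⟩ := p
  exacts [hJ i ⟨h, hp⟩, hJ i ⟨hp, h⟩]

namespace LongLine

/-- The absolute value `|x|_p ∈ 𝖱` of the point `x` of `𝖫ⁿ` in the signed direction `p`; it
vanishes if the coordinate has the opposite sign. -/
def coord (x : Fin n → LongLine) (p : Fin n × Bool) : LongRay := part p.2 (x p.1)

@[fun_prop]
lemma continuous_coord (p : Fin n × Bool) : Continuous fun x : Fin n → LongLine => coord x p :=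
  (continuous_part p.2).comp (continuous_apply p.1)

/-- The `J`-diagonal of `𝖫ⁿ`: `diag J (y, r)` has absolute value `r` in the directions in `J` and
agrees with `y` in the others. -/
def diag (J : Finset (Fin n × Bool)) : C((Fin n → LongLine) × LongRay, Fin n → LongLine) where
  toFun z i := if (i, true) ∈ J then ofRay true z.2 else if (i, false) ∈ J then ofRay false z.2
    else z.1 i
  continuous_toFun := continuous_pi fun i => by split_ifs <;> fun_prop

/-- The origin of `𝖫ⁿ`. -/
def origin : Fin n → LongLine := fun _ => ofRay true ⊥

lemma coord_origin (p : Fin n × Bool) : coord origin p = ⊥ := by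
  obtain ⟨i, _ | _⟩ := p
  exacts [part_not_ofRay true ⊥, part_ofRay true ⊥]

lemma admissible_setOf_le_coord (x : Fin n → LongLine) {a : LongRay} (ha : ⊥ < a) :
    Admissible n {p | a ≤ coord x p} := fun i ⟨h, h'⟩ => by
  obtain ⟨s, hs⟩ := exists_part_not_eq_bot (x i)
  cases s
  · exact (ha.trans_le (Finset.mem_filter.1 h).2).ne' hs
  · exact (ha.trans_le (Finset.mem_filter.1 h').2).ne' hs

variable {J K : Finset (Fin n × Bool)} {y : Fin n → LongLine} {r : LongRay} {p : Fin n × Bool}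

lemma diag_apply_of_mem (hJ : Admissible n J) (hp : p ∈ J) :
    diag J (y, r) p.1 = ofRay p.2 r := by
  have h := hJ.not_mem_opposite hp
  obtain ⟨i, _ | _⟩ := p
  · exact (if_neg h).trans (if_pos hp)
  · exact if_pos hp

lemma coord_diag_of_mem (hJ : Admissible n J) (hp : p ∈ J) : coord (diag J (y, r)) p = r := by
  rw [coord, diag_apply_of_mem hJ hp, part_ofRay]

lemma diag_apply_of_not_mem (hp : p ∉ J) (hp' : (p.1, !p.2) ∉ J) : diag J (y, r) p.1 = y p.1 := by
  obtain ⟨i, _ | _⟩ := p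
  · exact (if_neg hp').trans (if_neg hp)
  · exact (if_neg hp).trans (if_neg hp')

lemma coord_diag_of_not_mem (hp : p ∉ J) (hp' : (p.1, !p.2) ∉ J) :
    coord (diag J (y, r)) p = coord y p := by
  rw [coord, diag_apply_of_not_mem hp hp', coord]

lemma coord_diag_le (hJ : Admissible n J) (hp : p ∉ J) : coord (diag J (y, r)) p ≤ coord y p := by
  by_cases hp' : (p.1, !p.2) ∈ J
  · have h := diag_apply_of_mem (y := y) (r := r) hJ hp'
    refine le_of_eq_of_le ?_ bot_le
    obtain ⟨i, s⟩ := p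
    rw [coord, h, ← part_not_ofRay (!s) r, Bool.not_not]
  · exact (coord_diag_of_not_mem hp hp').le

lemma diag_diag_eq {a : Fin n → LongLine} (hK : Admissible n K) (hr : ⊥ < r)
    (ha : ∀ p ∈ K, coord a p = r) (s : LongRay) : diag K (diag K (a, s), r) = a := by
  have hmem : ∀ p ∈ K, diag K (diag K (a, s), r) p.1 = a p.1 := fun p hp => by
    rw [diag_apply_of_mem hK hp, ← ha p hp]
    exact ofRay_part_of_pos (hr.trans_eq (ha p hp).symm)
  funext i
  by_cases h : (i, true) ∈ K
  · exact hmem _ h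
  by_cases h' : (i, false) ∈ K
  · exact hmem _ h'
  · rw [diag_apply_of_not_mem (p := (i, true)) h h', diag_apply_of_not_mem (p := (i, true)) h h']

/-- The box of radius `δ` around the origin of `𝖫ⁿ`. -/
def box (n : ℕ) (δ : LongRay) : Set (Fin n → LongLine) := {x | ∀ q, coord x q ≤ δ}

lemma box_eq_pi (δ : LongRay) : box n δ = univ.pi fun _ => {x : LongLine | ∀ s, part s x ≤ δ} := by
  ext x
  exact ⟨fun h i _ s => h (i, s), fun h q => h q.1 (mem_univ _) q.2⟩

lemma isCompact_box (δ : LongRay) : IsCompact (box n δ) := by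
  rw [box_eq_pi]
  exact isCompact_univ_pi fun _ => isCompact_setOf_forall_part_le δ

lemma isSeparable_box (δ : LongRay) : TopologicalSpace.IsSeparable (box n δ) := by
  rw [box_eq_pi]
  exact TopologicalSpace.IsSeparable.univ_pi fun _ => isSeparable_setOf_forall_part_le δ

/-- Choosing points of `S` whose directions in `K` interlace forces these directions to a common
limit. -/
lemma exists_mem_coord_eq {S : Set (Fin n → LongLine)} (hS : IsClosed S) {δ : LongRay}
    (h : ∀ γ, ∃ x ∈ S, (∀ p ∈ K, γ ≤ coord x p) ∧ ∀ q ∉ K, coord x q ≤ δ) (γ : LongRay) :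
    ∃ ξ > γ, ∃ a ∈ S, (∀ p ∈ K, coord a p = ξ) ∧ ∀ q ∉ K, coord a q ≤ δ := by
  choose g hgS hgK hgδ using h
  obtain ⟨γ₀, hγ₀⟩ := exists_gt γ
  let u : ℕ → LongRay := fun k => (fun a => a ⊔ Finset.univ.sup (coord (g a)))^[k] γ₀
  let x : ℕ → Fin n → LongLine := fun k => g (u k)
  have hsucc : ∀ k, u (k + 1) = u k ⊔ Finset.univ.sup (coord (x k)) := fun k =>
    Function.iterate_succ_apply' _ k γ₀
  have hmono : Monotone u := monotone_nat_of_le_succ fun k => hsucc k ▸ le_sup_left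
  have hbdd : BddAbove (range u) := LongRay.bddAbove_of_countable (countable_range u)
  set ξ := ⨆ k, u k
  have hu : Tendsto u atTop (𝓝 ξ) := tendsto_atTop_ciSup hmono hbdd
  have hxu : ∀ k p, coord (x k) p ≤ u (k + 1) := fun k p =>
    hsucc k ▸ (Finset.le_sup (Finset.mem_univ p)).trans le_sup_right
  obtain ⟨a, -, (ha : Tendsto x (hyperfilter ℕ) (𝓝 a))⟩ :=
    (isCompact_box ξ).ultrafilter_le_nhds' ((hyperfilter ℕ).map x)
      (Ultrafilter.mem_map.2 (univ_mem' fun k q => (hxu k q).trans (le_ciSup hbdd (k + 1))))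
  have hcoord : ∀ p, Tendsto (fun k => coord (x k) p) (hyperfilter ℕ) (𝓝 (coord a p)) := fun p =>
    ((continuous_coord p).tendsto a).comp ha
  refine ⟨ξ, hγ₀.trans_le (le_ciSup hbdd 0), a, hS.mem_of_tendsto ha
    (Eventually.of_forall fun k => hgS (u k)), fun p hp => ?_,
    fun q hq => le_of_tendsto' (hcoord q) fun k => hgδ (u k) q hq⟩
  have hlim : Tendsto (fun k => coord (x k) p) atTop (𝓝 ξ) :=
    tendsto_of_tendsto_of_tendsto_of_le_of_le hu (hu.comp (tendsto_add_atTop_nat 1))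
      (fun k => hgK (u k) p hp) fun k => hxu k p
  exact tendsto_nhds_unique (hcoord p) (hlim.mono_left Nat.hyperfilter_le_atTop)

lemma exists_diag_mem {S : Set (Fin n → LongLine)} (hS : IsClosed S) {δ : LongRay}
    (h : ∀ γ, ∃ x ∈ S, (∀ p ∈ K, γ ≤ coord x p) ∧ ∀ q ∉ K, coord x q ≤ δ)
    (hK : Admissible n K) (γ : LongRay) : ∃ ξ > γ, ∃ y ∈ box n δ, diag K (y, ξ) ∈ S := by
  obtain ⟨ξ, hξ, a, ha, haK, haδ⟩ := exists_mem_coord_eq hS h γ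
  refine ⟨ξ, hξ, diag K (a, ⊥), fun q => ?_, by rwa [diag_diag_eq hK (bot_le.trans_lt hξ) haK]⟩
  by_cases hq : q ∈ K
  · rw [coord_diag_of_mem hK hq]
    exact bot_le
  · exact (coord_diag_le hK hq).trans (haδ q hq)

variable {f g : C(Fin n → LongLine, LongRay)}

/-- The cofinality class `𝔠(f)`: the admissible sets of directions along whose diagonal `f` is
unbounded. -/
def cof (f : C(Fin n → LongLine, LongRay)) : Set (Finset (Fin n × Bool)) :=
  {J | Admissible n J ∧ ¬BddAbove (range (f.comp ((diag J).curry origin)))}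

lemma cof_eq_of_homotopic (h : f.Homotopic g) : cof f = cof g :=
  Set.ext fun _ => and_congr_right fun _ =>
    (bddAbove_range_iff_of_homotopic (h.comp (.refl _))).not

lemma bddAbove_diag_iff (f : C(Fin n → LongLine, LongRay)) (J : Finset (Fin n × Bool))
    (y y' : Fin n → LongLine) : BddAbove (range (f.comp ((diag J).curry y))) ↔
      BddAbove (range (f.comp ((diag J).curry y'))) :=
  bddAbove_range_iff_of_homotopic (.comp (.refl f) (homotopic_curry (diag J) y y'))

lemma exists_forall_diag_le (hJ : Admissible n J) (h : J ∉ cof f) (δ : LongRay) :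
    ∃ B, ∀ y ∈ box n δ, ∀ r, f (diag J (y, r)) ≤ B := by
  obtain ⟨c, hc, hδ⟩ := isSeparable_box (n := n) δ
  have hbdd := not_not.1 fun hbdd => h ⟨hJ, hbdd⟩
  obtain ⟨B, hB⟩ := exists_forall_mem_closure_le (F := fun y r => f (diag J (y, r)))
    (fun r => by fun_prop) hc fun y _ => (bddAbove_diag_iff f J origin y).1 hbdd
  exact ⟨B, fun y hy => hB y (hδ hy)⟩

lemma exists_forall_le_diag (h : J ∈ cof f) (δ β : LongRay) :
    ∃ γ, ∀ y ∈ box n δ, ∀ r ≥ γ, β ≤ f (diag J (y, r)) := by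
  obtain ⟨c, hc, hδ⟩ := isSeparable_box (n := n) δ
  obtain ⟨γ, hγ⟩ := exists_forall_mem_closure_ge (F := fun y r => f (diag J (y, r)))
    (fun r => by fun_prop) hc (fun y _ => tendsto_atTop_atTop_of_not_bddAbove_range (by fun_prop)
      ((bddAbove_diag_iff f J origin y).not.1 h.2)) β
  exact ⟨γ, fun y hy => hγ y (hδ hy)⟩

lemma mem_cof_of_subset (hJ : J ∈ cof f) (hK : Admissible n K) (hJK : J ⊆ K) : K ∈ cof f := by
  by_contra hKf
  obtain ⟨B, hB⟩ := exists_forall_diag_le hK hKf ⊥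
  obtain ⟨β, hβ⟩ := exists_gt B
  have hmeet : ∀ γ, ∃ x ∈ {x | β ≤ f x}, (∀ p ∈ K, γ ≤ coord x p) ∧ ∀ q ∉ K, coord x q ≤ ⊥ := by
    intro γ
    have hoff : ∀ q ∉ K, coord (diag K (origin, γ)) q ≤ ⊥ := fun q hq =>
      (coord_diag_le hK hq).trans (coord_origin q).le
    obtain ⟨γ', hγ'⟩ := exists_forall_le_diag hJ γ β
    refine ⟨diag J (diag K (origin, γ), γ' ⊔ γ), hγ' _ (fun q => ?_) _ le_sup_left,
      fun p hp => ?_, fun q hq => (coord_diag_le hJ.1 fun h => hq (hJK h)).trans (hoff q hq)⟩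
    · by_cases hq : q ∈ K
      · exact (coord_diag_of_mem hK hq).le
      · exact (hoff q hq).trans bot_le
    · by_cases hpJ : p ∈ J
      · exact (coord_diag_of_mem hJ.1 hpJ).ge.trans' le_sup_right
      · rw [coord_diag_of_not_mem hpJ fun h => hK.not_mem_opposite hp (hJK h),
          coord_diag_of_mem hK hp]
  obtain ⟨ξ, -, y, hy, hS⟩ :=
    exists_diag_mem (isClosed_le continuous_const f.continuous) hmeet hK ⊥
  exact (hβ.trans_le hS).not_ge (hB y hy ξ)

lemma eventually_forall_le (hJ : Admissible n J) (h : J ∉ cof f) (δ : LongRay) :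
    ∀ᶠ B in atTop, ∀ x, (∀ q ∉ J, coord x q ≤ δ) → f x ≤ B := by
  induction J using Finset.strongInduction generalizing δ with
  | _ J ih =>
  by_contra hcon
  obtain ⟨B, hB⟩ := exists_forall_diag_le hJ h δ
  obtain ⟨β, hβ⟩ := exists_gt B
  have hmeet : ∀ γ, ∃ x ∈ {x | β ≤ f x}, (∀ p ∈ J, γ ≤ coord x p) ∧ ∀ q ∉ J, coord x q ≤ δ := by
    intro γ
    have herase : ∀ᶠ M in atTop, ∀ p ∈ J, ∀ x,
        (∀ q ∉ J.erase p, coord x q ≤ δ ⊔ γ) → f x ≤ M :=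
      J.eventually_all.2 fun p hp => ih _ (Finset.erase_ssubset hp)
        (hJ.mono (Finset.erase_subset _ _))
        (fun hp' => h (mem_cof_of_subset hp' hJ (Finset.erase_subset _ _))) (δ ⊔ γ)
    obtain ⟨M, hM, hMJ, hβM⟩ :=
      ((not_eventually.1 hcon).and_eventually (herase.and (eventually_ge_atTop β))).exists
    push Not at hM
    obtain ⟨x, hx, hMx⟩ := hM
    refine ⟨x, hβM.trans hMx.le, fun p hp => ?_, hx⟩
    by_contra! hpγ
    refine hMx.not_ge (hMJ p hp x fun q hq => ?_)
    by_cases hqp : q = p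
    · exact hqp ▸ hpγ.le.trans le_sup_right
    · exact (hx q fun hqJ => hq (Finset.mem_erase.2 ⟨hqp, hqJ⟩)).trans le_sup_left
  obtain ⟨ξ, -, y, hy, hS⟩ :=
    exists_diag_mem (isClosed_le continuous_const f.continuous) hmeet hJ ⊥
  exact (hβ.trans_le hS).not_ge (hB y hy ξ)

lemma eventually_forall_ge (h : J ∈ cof f) (δ β : LongRay) :
    ∀ᶠ γ in atTop, ∀ x, (∀ p ∈ J, γ ≤ coord x p) → (∀ q ∉ J, coord x q ≤ δ) → β ≤ f x := by
  by_contra hcon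
  obtain ⟨β', hβ⟩ := exists_gt β
  obtain ⟨γ₀, hγ₀⟩ := exists_forall_le_diag h δ β'
  have hmeet : ∀ γ, ∃ x ∈ {x | f x ≤ β}, (∀ p ∈ J, γ ≤ coord x p) ∧ ∀ q ∉ J, coord x q ≤ δ := by
    intro γ
    obtain ⟨γ', hγ', hx⟩ := frequently_atTop.1 (not_eventually.1 hcon) γ
    push Not at hx
    obtain ⟨x, hx, hxδ, hlt⟩ := hx
    exact ⟨x, hlt.le, fun p hp => hγ'.trans (hx p hp), hxδ⟩
  obtain ⟨ξ, hξ, y, hy, hS⟩ :=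
    exists_diag_mem (isClosed_le f.continuous continuous_const) hmeet h.1 γ₀
  exact (hβ.trans_le (hγ₀ y hy ξ hξ.le)).not_ge hS

/-- At points whose directions off an admissible `J` have height at most `δ`, the ordinal `γ` is an
upper bound for `f` if `J ∉ 𝔠(f)`, and a height in the directions in `J` beyond which `f` exceeds
`δ` if `J ∈ 𝔠(f)`. -/
structure IsGauge (f : C(Fin n → LongLine, LongRay)) (δ γ : CtblOrd) : Prop where
  lt : ∀ J, Admissible n J → J ∉ cof f →
    ∀ x, (∀ q ∉ J, (coord x q).fst ≤ δ) → (f x).fst < γ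
  gt : ∀ J ∈ cof f, ∀ x, (∀ p ∈ J, γ ≤ (coord x p).fst) → (∀ q ∉ J, (coord x q).fst ≤ δ) →
    δ < (f x).fst

lemma eventually_isGauge (f : C(Fin n → LongLine, LongRay)) (δ : CtblOrd) :
    ∀ᶠ γ in atTop, IsGauge f δ γ := by
  obtain ⟨δ', hδ⟩ := exists_gt δ
  have hle : ∀ {y : LongRay}, y.fst ≤ δ → y ≤ ofOrd δ' := fun hy =>
    (lt_ofOrd_iff.2 (hy.trans_lt hδ)).le
  have hlt : ∀ J, ∀ᶠ γ in atTop, Admissible n J → J ∉ cof f →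
      ∀ x, (∀ q ∉ J, (coord x q).fst ≤ δ) → (f x).fst < γ := fun J => by
    refine eventually_imp_distrib_left.2 fun hJ => eventually_imp_distrib_left.2 fun hJf => ?_
    obtain ⟨B, hB⟩ := (eventually_forall_le hJ hJf (ofOrd δ')).exists
    filter_upwards [eventually_gt_atTop B.fst] with γ hγ x hx
    exact (fst_mono (hB x fun q hq => hle (hx q hq))).trans_lt hγ
  have hgt : ∀ J, ∀ᶠ γ in atTop, J ∈ cof f → ∀ x, (∀ p ∈ J, γ ≤ (coord x p).fst) →
      (∀ q ∉ J, (coord x q).fst ≤ δ) → δ < (f x).fst := fun J => by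
    refine eventually_imp_distrib_left.2 fun hJf => ?_
    obtain ⟨r, hr⟩ := (eventually_forall_ge hJf (ofOrd δ') (ofOrd δ')).exists
    filter_upwards [eventually_gt_atTop r.fst] with γ hγ x hx hxδ
    refine hδ.trans_le (ofOrd_le_iff.1 (hr x (fun p hp => ?_) fun q hq => hle (hxδ q hq)))
    exact (lt_ofOrd_iff.2 hγ).le.trans (ofOrd_le_iff.2 (hx p hp))
  filter_upwards [eventually_all.2 hlt, eventually_all.2 hgt] with γ hγ hγ'
  exact ⟨hγ, hγ'⟩

lemma le_fst_iff_mem_cof {α : CtblOrd} (hα : ∀ δ < α, ∃ γ < α, IsGauge f δ γ) (hpos : ⊥ < α)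
    (x : Fin n → LongLine) :
    α ≤ (f x).fst ↔ ({p | α ≤ (coord x p).fst} : Finset (Fin n × Bool)) ∈ cof f := by
  set J : Finset (Fin n × Bool) := {p | α ≤ (coord x p).fst} with hJ_def
  have hmem : ∀ p, p ∈ J ↔ α ≤ (coord x p).fst := by simp [hJ_def]
  have hJ : Admissible n J := by
    simpa only [hJ_def, ofOrd_le_iff] using
      admissible_setOf_le_coord x (a := ofOrd α) (lt_iff.2 (.inl hpos))
  obtain ⟨δ, hδ, hoff⟩ : ∃ δ < α, ∀ q ∉ J, (coord x q).fst ≤ δ :=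
    ⟨Jᶜ.sup fun q => (coord x q).fst,
      (Finset.sup_lt_iff hpos).2 fun q hq =>
        not_le.1 fun h => Finset.mem_compl.1 hq ((hmem q).2 h),
      fun q hq => Finset.le_sup (f := fun q => (coord x q).fst) (Finset.mem_compl.2 hq)⟩
  constructor
  · intro h
    by_contra hJf
    obtain ⟨γ, hγ, hgauge⟩ := hα δ hδ
    exact (hgauge.lt J hJ hJf x hoff).not_ge (hγ.le.trans h)
  · intro hJf
    by_contra! h
    obtain ⟨γ, hγ, hgauge⟩ := hα (δ ⊔ (f x).fst) (max_lt hδ h)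
    exact (hgauge.gt J hJf x (fun p hp => hγ.le.trans ((hmem p).1 hp))
      fun q hq => (hoff q hq).trans le_sup_left).not_ge le_sup_right

theorem homotopic_of_cof_eq (h : cof f = cof g) : f.Homotopic g := by
  choose G hG using fun δ => ((eventually_isGauge f δ).and (eventually_isGauge g δ)).exists
  refine homotopic_of_isCofinal (CtblOrd.isCofinal_setOf_forall_lt_lt G) fun α hα x => ?_
  rcases eq_bot_or_bot_lt α with rfl | hpos
  · simp only [bot_le]
  · rw [le_fst_iff_mem_cof (fun δ hδ => ⟨G δ, hα δ hδ, (hG δ).1⟩) hpos,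
      le_fst_iff_mem_cof (fun δ hδ => ⟨G δ, hα δ hδ, (hG δ).2⟩) hpos, h]

/-- The map `x ↦ max_{I ∈ A} min_{p ∈ I} |x|_p`, an empty `I` contributing `0`. -/
def canonicalMap (A : Set (Finset (Fin n × Bool))) : C(Fin n → LongLine, LongRay) where
  toFun x := A.toFinite.toFinset.sup fun I => if h : I.Nonempty then I.inf' h (coord x) else ⊥
  continuous_toFun := by
    refine Continuous.finset_sup_apply fun I _ => ?_
    split_ifs with h
    · exact Continuous.finset_inf'_apply h fun p _ => continuous_coord p
    · exact continuous_const

variable {A : Set (Finset (Fin n × Bool))}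

lemma le_canonicalMap_iff (hA : ∀ I ∈ A, I.Nonempty) {a : LongRay} (ha : ⊥ < a)
    (x : Fin n → LongLine) : a ≤ canonicalMap A x ↔ ∃ I ∈ A, ∀ p ∈ I, a ≤ coord x p := by
  refine (Finset.le_sup_iff ha).trans (exists_congr fun I => ?_)
  rw [Set.Finite.mem_toFinset]
  exact and_congr_right fun hI => by rw [dif_pos (hA I hI), Finset.le_inf'_iff]

lemma mem_cof_canonicalMap (hA : ∀ I ∈ A, I.Nonempty) :
    J ∈ cof (canonicalMap A) ↔ Admissible n J ∧ ∃ I ∈ A, I ⊆ J := by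
  refine and_congr_right fun hJ => ⟨fun h => ?_, ?_⟩
  · obtain ⟨r, hr⟩ : ∃ r, ⊥ < canonicalMap A (diag J (origin, r)) := by
      by_contra! hle
      exact h ⟨⊥, forall_mem_range.2 hle⟩
    obtain ⟨I, hI, hle⟩ := (le_canonicalMap_iff hA hr _).1 le_rfl
    refine ⟨I, hI, fun p hp => ?_⟩
    by_contra hpJ
    exact ((hr.trans_le (hle p hp)).trans_le (coord_diag_le hJ hpJ)).ne' (coord_origin p)
  · rintro ⟨I, hI, hIJ⟩ ⟨m, hm⟩
    obtain ⟨r, hr⟩ := exists_gt m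
    exact (hr.trans_le ((le_canonicalMap_iff hA (bot_le.trans_lt hr) _).2 ⟨I, hI, fun p hp =>
      (coord_diag_of_mem hJ (hIJ hp)).ge⟩)).not_ge (hm (mem_range_self r))

/-- The minimal elements of the cofinality class. -/
def minCof (f : C(Fin n → LongLine, LongRay)) : Set (Finset (Fin n × Bool)) :=
  {J | Minimal (· ∈ cof f) J}

lemma isAntichain_minCof (f : C(Fin n → LongLine, LongRay)) : IsAntichain (· ⊆ ·) (minCof f) :=
  setOfPred_minimal_antichain (· ∈ cof f)

lemma nonempty_of_mem_cof (h : J ∈ cof f) : J.Nonempty := by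
  rw [Finset.nonempty_iff_ne_empty]
  rintro rfl
  exact h.2 ⟨f origin, forall_mem_range.2 fun _ => le_rfl⟩

lemma cof_canonicalMap_minCof (f : C(Fin n → LongLine, LongRay)) :
    cof (canonicalMap (minCof f)) = cof f := by
  ext J
  rw [mem_cof_canonicalMap fun I hI => nonempty_of_mem_cof hI.prop]
  constructor
  · rintro ⟨hJ, I, hI, hIJ⟩
    exact mem_cof_of_subset hI.prop hJ hIJ
  · intro hJ
    obtain ⟨I, hIJ, hI⟩ := (cof f).toFinite.exists_le_minimal hJ
    exact ⟨hJ.1, I, hI, hIJ⟩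

lemma minCof_canonicalMap (hA : ∀ I ∈ A, Admissible n I ∧ I.Nonempty)
    (hanti : IsAntichain (· ⊆ ·) A) : minCof (canonicalMap A) = A := by
  have hmem := fun J => mem_cof_canonicalMap (J := J) fun I hI => (hA I hI).2
  have hsub : A ⊆ cof (canonicalMap A) := fun I hI =>
    (hmem I).2 ⟨(hA I hI).1, I, hI, subset_rfl⟩
  ext J
  constructor
  · intro hJ
    obtain ⟨-, I, hI, hIJ⟩ := (hmem J).1 hJ.prop
    exact hJ.eq_of_le (hsub hI) hIJ ▸ hI
  · refine fun hJ => ⟨hsub hJ, fun K hK hKJ => ?_⟩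
    obtain ⟨-, I, hI, hIK⟩ := (hmem K).1 hK
    exact hanti.eq hI hJ (hIK.trans hKJ) ▸ hIK

end LongLine

end Cofinality

/-- `[𝖫ⁿ, 𝖱]` is in bijection with the antichains of the set of
nonempty admissible subsets of `N^± = {+1,…,+n,−1,…,−n}`, ordered by inclusion. -/
theorem homotopy_classes_longline_to_ray (n : ℕ) :
    Nonempty (Quot (fun f g : C(Fin n → LongLine, LongRay) => f.Homotopic g) ≃
      {A : Set (Finset (Fin n × Bool)) //
        (∀ I ∈ A, Admissible n I ∧ I.Nonempty) ∧ IsAntichain (· ⊆ ·) A}) := by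
  refine ⟨Quot.lift (fun f => ⟨LongLine.minCof f,
      fun I hI => ⟨hI.prop.1, LongLine.nonempty_of_mem_cof hI.prop⟩,
      LongLine.isAntichain_minCof f⟩) fun f g h => Subtype.ext ?_,
    fun A => Quot.mk _ (LongLine.canonicalMap A), ?_, fun A => Subtype.ext ?_⟩
  · simp only [LongLine.minCof, LongLine.cof_eq_of_homotopic h]
  · rintro ⟨f⟩
    exact Quot.sound (LongLine.homotopic_of_cof_eq (LongLine.cof_canonicalMap_minCof f))
  · exact LongLine.minCof_canonicalMap A.2.1 A.2.2
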